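/- Let b > 1 and β ∈ (0, 1/2). There exists a constant C₁ > 0, depending only on b and β, such that for all x, y ∈ [0,1] with 0 < |x − y| ≤ 1/(2b²), the real random variable X(Θ, Λ) = |f_{Θ,Λ}(x) − f_{Θ,Λ}(y)|² (where (Θ, Λ) is distributed according to the infinite product of uniform measures on [0,1]) has a probability density function h : ℝ → [0, ∞) with respect to Lebesgue measure, and h(t) ≤ C₁ |x − y|^{−2β} for all t. -/

import Mathlib

open MeasureTheory

/-- First coordinate of the random vector-valued Weierstrass function
`t ↦ ∑ b^{-βn} cos(2π(bⁿ t + θₙ))`. -/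
noncomputable def W1 (b β : ℝ) (Θ : ℕ → ℝ) (t : ℝ) : ℝ :=
  ∑' n : ℕ, b ^ (-β * (n : ℝ)) * Real.cos (2 * Real.pi * (b ^ n * t + Θ n))

/-- Second coordinate of the random vector-valued Weierstrass function
`t ↦ ∑ b^{-βn} sin(2π(bⁿ t + λₙ))`. -/
noncomputable def W2 (b β : ℝ) (Λ : ℕ → ℝ) (t : ℝ) : ℝ :=
  ∑' n : ℕ, b ^ (-β * (n : ℝ)) * Real.sin (2 * Real.pi * (b ^ n * t + Λ n))

/-- Euclidean distance `|f_{Θ,Λ}(x) - f_{Θ,Λ}(y)|` in ℝ². -/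
noncomputable def Wdist (b β : ℝ) (Θ Λ : ℕ → ℝ) (x y : ℝ) : ℝ :=
  Real.sqrt ((W1 b β Θ x - W1 b β Θ y) ^ 2 + (W2 b β Λ x - W2 b β Λ y) ^ 2)

/-- The graph `G(f_{Θ,Λ}) = {(t, f_{Θ,Λ}(t)) : t ∈ [0,1]}` inside ℝ³ = ℝ × ℝ². -/
def Wgraph (b β : ℝ) (Θ Λ : ℕ → ℝ) : Set (ℝ × ℝ × ℝ) :=
  {p | ∃ t ∈ Set.Icc (0 : ℝ) 1, p = (t, W1 b β Θ t, W2 b β Λ t)}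

/-- `μ` is the infinite product over `ℕ` of the uniform probability measures on `[0,1]`:
the measure of every measurable cylinder is the corresponding finite product of
uniform measures. -/
def IsUniformProductMeasure (μ : Measure (ℕ → ℝ)) : Prop :=
  ∀ (t : Finset ℕ) (s : ℕ → Set ℝ), (∀ i, MeasurableSet (s i)) →
    μ {f : ℕ → ℝ | ∀ i ∈ t, f i ∈ s i} =
      ∏ i ∈ t, (volume.restrict (Set.Icc (0 : ℝ) 1)) (s i)


noncomputable def pW (s : ℝ) : ENNReal :=
  (Set.Ioo (-1 : ℝ) 1).indicator (fun s => ENNReal.ofReal ((1 - s ^ 2) ^ (-(1 / 4) : ℝ))) s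

lemma pW_meas : Measurable pW := by
  unfold pW
  refine Measurable.indicator ?_ measurableSet_Ioo
  fun_prop

lemma pW_cube_fin : ∫⁻ s, pW s ^ 3 < ⊤ := by
  have h1 : IntervalIntegrable (fun s : ℝ => (1 - s) ^ (-(3 / 4) : ℝ)) volume (-1) 1 := by
    have := (intervalIntegral.intervalIntegrable_rpow' (a := 2) (b := 0) (r := (-(3/4) : ℝ)) (by norm_num)).comp_sub_left 1
    convert this using 1 <;> norm_num
  have h2 : IntervalIntegrable (fun s : ℝ => (1 + s) ^ (-(3 / 4) : ℝ)) volume (-1) 1 := by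
    have := (intervalIntegral.intervalIntegrable_rpow' (a := 0) (b := 2) (r := (-(3/4) : ℝ)) (by norm_num)).comp_add_left 1
    convert this using 1 <;> norm_num
  have h3 := (h1.add h2)
  rw [intervalIntegrable_iff_integrableOn_Ioo_of_le (by norm_num)] at h3
  have h4 := h3.hasFiniteIntegral
  rw [hasFiniteIntegral_iff_norm] at h4
  refine lt_of_le_of_lt ?_ h4
  rw [← lintegral_indicator measurableSet_Ioo]
  refine lintegral_mono fun s => ?_
  unfold pW
  by_cases hs : s ∈ Set.Ioo (-1 : ℝ) 1
  · simp only [Set.indicator_of_mem hs]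
    have hp : 0 < 1 - s ^ 2 := by nlinarith [hs.1, hs.2]
    have a1 : 0 < 1 - s := by linarith [hs.2]
    have a2 : 0 < 1 + s := by linarith [hs.1]
    rw [← ENNReal.ofReal_pow (by positivity), ← Real.rpow_natCast, ← Real.rpow_mul hp.le]
    refine ENNReal.ofReal_le_ofReal ?_
    refine le_trans ?_ (le_abs_self _)
    norm_num
    rcases le_total 0 s with h | h
    · have : (1 - s ^ 2) ^ (-(3 / 4) : ℝ) ≤ (1 - s) ^ (-(3 / 4) : ℝ) :=
        Real.rpow_le_rpow_of_nonpos a1 (by nlinarith) (by norm_num)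
      have : 0 < (1 + s) ^ (-(3 / 4) : ℝ) := by positivity
      linarith
    · have : (1 - s ^ 2) ^ (-(3 / 4) : ℝ) ≤ (1 + s) ^ (-(3 / 4) : ℝ) :=
        Real.rpow_le_rpow_of_nonpos a2 (by nlinarith) (by norm_num)
      have : 0 < (1 - s) ^ (-(3 / 4) : ℝ) := by positivity
      linarith
  · simp [Set.indicator_of_notMem hs]

lemma one_piece (c : ℝ) (k : ℤ) (F : ℝ → ENNReal) :
    ∫⁻ u in Set.Ioo ((k : ℝ) / 2 - c) ((k + 1 : ℝ) / 2 - c), F (Real.cos (2 * Real.pi * (c + u)))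
      ≤ ∫⁻ s, F s * pW s ^ 2 := by
  have hpi := Real.pi_pos
  set I := Set.Ioo ((k : ℝ) / 2 - c) ((k + 1 : ℝ) / 2 - c) with hI
  set f : ℝ → ℝ := fun u => Real.cos (2 * Real.pi * (c + u)) with hf
  set f' : ℝ → ℝ := fun u => -Real.sin (2 * Real.pi * (c + u)) * (2 * Real.pi) with hf'
  have hd : ∀ u ∈ I, HasDerivWithinAt f (f' u) I u := by
    intro u _
    have h1 : HasDerivAt (fun u : ℝ => 2 * Real.pi * (c + u)) (2 * Real.pi) u := by
      simpa using ((hasDerivAt_id u).const_add c).const_mul (2 * Real.pi)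
    exact (h1.cos).hasDerivWithinAt
  have hinj : Set.InjOn f I := by
    intro u hu v hv huv
    simp only [hf] at huv
    rw [Real.cos_eq_cos_iff] at huv
    obtain ⟨m, hm | hm⟩ := huv
    · have h1 : v - u = m := by
        have : 2 * Real.pi * (v - u) = 2 * Real.pi * m := by linarith
        exact mul_left_cancel₀ (by positivity) this
      have h2 : (m : ℝ) < 1 := by rw [← h1]; linarith [hu.1, hv.2]
      have h3 : (-1 : ℝ) < m := by rw [← h1]; linarith [hu.2, hv.1]
      have h4 : m = 0 := by
        have : m < 1 := by exact_mod_cast h2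
        have : -1 < m := by exact_mod_cast h3
        omega
      rw [h4] at h1; push_cast at h1; linarith
    · have h1 : v + u + 2 * c = m := by
        have : 2 * Real.pi * (v + u + 2 * c) = 2 * Real.pi * m := by linarith
        exact mul_left_cancel₀ (by positivity) this
      have h2 : (m : ℝ) < k + 1 := by rw [← h1]; linarith [hu.2, hv.2]
      have h3 : (k : ℝ) < m := by rw [← h1]; linarith [hu.1, hv.1]
      have : m < k + 1 := by exact_mod_cast h2
      have : k < m := by exact_mod_cast h3
      omega
  have key := lintegral_image_eq_lintegral_abs_deriv_mul (s := I) measurableSet_Ioo hd hinj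
    (fun s => F s * pW s ^ 2)
  refine le_trans ?_ (setLIntegral_le_lintegral (f '' I) _)
  rw [key]
  refine setLIntegral_mono' measurableSet_Ioo fun u hu => ?_
  have hsin : Real.sin (2 * Real.pi * (c + u)) ≠ 0 := by
    intro h
    rw [Real.sin_eq_zero_iff] at h
    obtain ⟨m, hm⟩ := h
    have h1 : 2 * (c + u) = m := by
      have : Real.pi * (2 * (c + u)) = Real.pi * m := by linarith
      exact mul_left_cancel₀ (by positivity) this
    have h2 : (m : ℝ) < k + 1 := by rw [← h1]; linarith [hu.2]
    have h3 : (k : ℝ) < m := by rw [← h1]; linarith [hu.1]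
    have : m < k + 1 := by exact_mod_cast h2
    have : k < m := by exact_mod_cast h3
    omega
  have hsq := Real.sin_sq_add_cos_sq (2 * Real.pi * (c + u))
  have hspos : 0 < Real.sin (2 * Real.pi * (c + u)) ^ 2 := by positivity
  have hmem : f u ∈ Set.Ioo (-1 : ℝ) 1 := by
    rw [Set.mem_Ioo, ← abs_lt, ← sq_lt_one_iff_abs_lt_one]; simp only [hf]; linarith
  have hp : pW (f u) ^ 2 = ENNReal.ofReal (|Real.sin (2 * Real.pi * (c + u))|⁻¹) := by
    unfold pW
    rw [Set.indicator_of_mem hmem]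
    have : 1 - f u ^ 2 = |Real.sin (2 * Real.pi * (c + u))| ^ 2 := by
      rw [sq_abs]; simp only [hf]; linarith
    rw [this, ← ENNReal.ofReal_pow (by positivity), ← Real.rpow_natCast, ← Real.rpow_mul (by positivity),
      ← Real.rpow_natCast, ← Real.rpow_mul (by positivity), ← Real.rpow_neg_one]
    norm_num
  have h1 : (1 : ENNReal) ≤ ENNReal.ofReal |f' u| * pW (f u) ^ 2 := by
    rw [hp, ← ENNReal.ofReal_mul (abs_nonneg _), ← ENNReal.ofReal_one]
    refine ENNReal.ofReal_le_ofReal ?_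
    simp only [hf', abs_mul, abs_neg]
    have : |Real.sin (2 * Real.pi * (c + u))| ≠ 0 := abs_ne_zero.2 hsin
    field_simp
    rw [abs_of_pos Real.pi_pos, abs_of_pos (by norm_num)]
    linarith [Real.pi_gt_three]
  calc F (f u) = 1 * F (f u) := by rw [one_mul]
    _ ≤ (ENNReal.ofReal |f' u| * pW (f u) ^ 2) * F (f u) := by gcongr
    _ = _ := by ring

lemma one_var (c : ℝ) (F : ℝ → ENNReal) :
    ∫⁻ u in Set.Icc (0 : ℝ) 1, F (Real.cos (2 * Real.pi * (c + u)))
      ≤ 3 * ∫⁻ s, F s * pW s ^ 2 := by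
  set J : ℕ → Set ℝ := fun i =>
    Set.Ico (((⌊2 * c⌋ + i : ℤ) : ℝ) / 2 - c) ((((⌊2 * c⌋ + i : ℤ) : ℝ) + 1) / 2 - c) with hJ
  have hsub : Set.Icc (0 : ℝ) 1 ⊆ J 0 ∪ (J 1 ∪ J 2) := by
    intro u hu
    have e1 := Int.floor_le (2 * c)
    have e2 := Int.lt_floor_add_one (2 * c)
    simp only [hJ, Set.mem_union, Set.mem_Ico]
    push_cast
    by_cases h1 : u < ((⌊2 * c⌋ : ℝ) + 1) / 2 - c
    · left; constructor <;> linarith [hu.1]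
    · by_cases h2 : u < ((⌊2 * c⌋ : ℝ) + 2) / 2 - c
      · right; left; constructor <;> linarith [hu.1]
      · right; right; constructor <;> linarith [hu.1, hu.2]
  have hp : ∀ i, ∫⁻ u in J i, F (Real.cos (2 * Real.pi * (c + u))) ≤ ∫⁻ s, F s * pW s ^ 2 := by
    intro i
    simp only [hJ]
    rw [← setLIntegral_congr Ioo_ae_eq_Ico]
    exact one_piece c _ F
  refine (lintegral_mono_set hsub).trans ?_
  refine (lintegral_union_le _ _ _).trans ?_
  refine (add_le_add (hp 0) ((lintegral_union_le _ _ _).trans (add_le_add (hp 1) (hp 2)))).trans ?_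
  apply le_of_eq; ring

lemma amgm (p q r : ENNReal) :
    p ^ 2 * (q ^ 2 * r ^ 2) ≤ p ^ 3 * q ^ 3 + p ^ 3 * r ^ 3 + q ^ 3 * r ^ 3 := by
  have key : ∀ a b c : ENNReal, c ≤ a → c ≤ b → a ^ 2 * (b ^ 2 * c ^ 2) ≤ a ^ 3 * b ^ 3 := by
    intro a b c h1 h2
    calc a ^ 2 * (b ^ 2 * c ^ 2) = a ^ 2 * b ^ 2 * (c * c) := by ring
      _ ≤ a ^ 2 * b ^ 2 * (a * b) := by gcongr
      _ = _ := by ring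
  rcases le_total p q with h1 | h1
  · rcases le_total p r with h2 | h2
    · calc p ^ 2 * (q ^ 2 * r ^ 2) = q ^ 2 * (r ^ 2 * p ^ 2) := by ring
        _ ≤ q ^ 3 * r ^ 3 := key _ _ _ h1 h2
        _ ≤ _ := le_add_self
    · exact (key p q r h2 (h2.trans h1)).trans (le_add_right le_self_add)
  · rcases le_total q r with h2 | h2
    · calc p ^ 2 * (q ^ 2 * r ^ 2) = p ^ 2 * (r ^ 2 * q ^ 2) := by ring
        _ ≤ p ^ 3 * r ^ 3 := key _ _ _ h1 h2
        _ ≤ _ := le_add_right le_add_self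
    · exact (key p q r (h2.trans h1) h2).trans (le_add_right le_self_add)

lemma affine_int (F : ℝ → ENNReal) (hF : Measurable F) (r a δ : ℝ) (hδ : 0 < δ) (ha : δ ≤ |a|) :
    ∫⁻ s, F (r + a * s) ≤ ENNReal.ofReal δ⁻¹ * ∫⁻ s, F s := by
  have ha0 : a ≠ 0 := by rintro rfl; simp at ha; linarith
  have h1 : ∫⁻ s, F (r + a * s) = ∫⁻ s, F (r + s) ∂(Measure.map (a * ·) volume) := by
    rw [lintegral_map (by fun_prop) (by fun_prop)]
  rw [h1, Real.map_volume_mul_left ha0, lintegral_smul_measure, lintegral_add_left_eq_self]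
  rw [smul_eq_mul]
  gcongr
  rw [abs_inv]
  gcongr

lemma three_dens (F : ℝ → ENNReal) (hF : Measurable F) (r a b c δ : ℝ) (hδ : 0 < δ) (ha : δ ≤ |a|)
    (hb : δ ≤ |b|) (hc : δ ≤ |c|) :
    ∫⁻ s, (∫⁻ t, (∫⁻ w, F (r + a * s + b * t + c * w) * pW w ^ 2) * pW t ^ 2) * pW s ^ 2
      ≤ 3 * (∫⁻ s, pW s ^ 3) ^ 2 * (ENNReal.ofReal δ⁻¹ * ∫⁻ s, F s) := by
  have hm := pW_meas
  have hT1 : ∫⁻ s, ∫⁻ t, ∫⁻ w, F (r + a * s + b * t + c * w) * (pW s ^ 3 * pW t ^ 3)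
      ≤ (∫⁻ s, pW s ^ 3) ^ 2 * (ENNReal.ofReal δ⁻¹ * ∫⁻ s, F s) := by
    calc _ ≤ ∫⁻ s, ∫⁻ t, (ENNReal.ofReal δ⁻¹ * ∫⁻ s, F s) * (pW s ^ 3 * pW t ^ 3) := by
          refine lintegral_mono fun s => lintegral_mono fun t => ?_
          dsimp only
          rw [lintegral_mul_const _ (by fun_prop)]
          gcongr
          exact affine_int F hF _ c δ hδ hc
      _ = _ := by
          simp_rw [← mul_assoc]
          simp_rw [lintegral_const_mul _ (hm.pow_const 3)]
          rw [lintegral_mul_const _ (by fun_prop), lintegral_const_mul _ (by fun_prop)]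
          ring
  have hT2 : ∫⁻ s, ∫⁻ t, ∫⁻ w, F (r + a * s + b * t + c * w) * (pW s ^ 3 * pW w ^ 3)
      ≤ (∫⁻ s, pW s ^ 3) ^ 2 * (ENNReal.ofReal δ⁻¹ * ∫⁻ s, F s) := by
    calc _ = ∫⁻ s, ∫⁻ w, ∫⁻ t, F (r + a * s + b * t + c * w) * (pW s ^ 3 * pW w ^ 3) := by
          refine lintegral_congr fun s => ?_
          exact lintegral_lintegral_swap (by fun_prop)
      _ ≤ ∫⁻ s, ∫⁻ t, (ENNReal.ofReal δ⁻¹ * ∫⁻ s, F s) * (pW s ^ 3 * pW t ^ 3) := by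
          refine lintegral_mono fun s => lintegral_mono fun t => ?_
          dsimp only
          rw [lintegral_mul_const _ (by fun_prop)]
          gcongr
          refine le_trans (le_of_eq ?_) (affine_int F hF (r + a * s + c * t) b δ hδ hb)
          refine lintegral_congr fun w => ?_
          congr 1; ring
      _ = _ := by
          simp_rw [← mul_assoc]
          simp_rw [lintegral_const_mul _ (hm.pow_const 3)]
          rw [lintegral_mul_const _ (by fun_prop), lintegral_const_mul _ (by fun_prop)]
          ring
  have hT3 : ∫⁻ s, ∫⁻ t, ∫⁻ w, F (r + a * s + b * t + c * w) * (pW t ^ 3 * pW w ^ 3)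
      ≤ (∫⁻ s, pW s ^ 3) ^ 2 * (ENNReal.ofReal δ⁻¹ * ∫⁻ s, F s) := by
    calc _ = ∫⁻ t, ∫⁻ s, ∫⁻ w, F (r + a * s + b * t + c * w) * (pW t ^ 3 * pW w ^ 3) := by
          refine lintegral_lintegral_swap ?_
          refine Measurable.aemeasurable ?_
          refine Measurable.lintegral_prod_right' (f := fun z : (ℝ × ℝ) × ℝ =>
            F (r + a * z.1.1 + b * z.1.2 + c * z.2) * (pW z.1.2 ^ 3 * pW z.2 ^ 3)) ?_
          fun_prop
      _ = ∫⁻ t, ∫⁻ w, ∫⁻ s, F (r + a * s + b * t + c * w) * (pW t ^ 3 * pW w ^ 3) := by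
          refine lintegral_congr fun s => ?_
          exact lintegral_lintegral_swap (by fun_prop)
      _ ≤ ∫⁻ s, ∫⁻ t, (ENNReal.ofReal δ⁻¹ * ∫⁻ s, F s) * (pW s ^ 3 * pW t ^ 3) := by
          refine lintegral_mono fun s => lintegral_mono fun t => ?_
          dsimp only
          rw [lintegral_mul_const _ (by fun_prop)]
          gcongr
          refine le_trans (le_of_eq ?_) (affine_int F hF (r + b * s + c * t) a δ hδ ha)
          refine lintegral_congr fun w => ?_
          congr 1; ring
      _ = _ := by
          simp_rw [← mul_assoc]
          simp_rw [lintegral_const_mul _ (hm.pow_const 3)]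
          rw [lintegral_mul_const _ (by fun_prop), lintegral_const_mul _ (by fun_prop)]
          ring
  have hmeas2 : ∀ G : (ℝ × ℝ) × ℝ → ENNReal, Measurable G → ∀ s,
      Measurable (fun t => ∫⁻ w, G ((s, t), w)) := by
    intro G hG s
    exact Measurable.lintegral_prod_right' (f := fun z : ℝ × ℝ => G ((s, z.1), z.2)) (by fun_prop)
  have hmeas1 : ∀ G : (ℝ × ℝ) × ℝ → ENNReal, Measurable G →
      Measurable (fun s => ∫⁻ t, ∫⁻ w, G ((s, t), w)) := by
    intro G hG
    exact Measurable.lintegral_prod_right' (f := fun z : ℝ × ℝ => ∫⁻ w, G (z, w))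
      (Measurable.lintegral_prod_right' hG)
  have hadd : ∀ G H : (ℝ × ℝ) × ℝ → ENNReal, Measurable G → 
      ∫⁻ s, ∫⁻ t, ∫⁻ w, (G ((s, t), w) + H ((s, t), w))
        = (∫⁻ s, ∫⁻ t, ∫⁻ w, G ((s, t), w)) + ∫⁻ s, ∫⁻ t, ∫⁻ w, H ((s, t), w) := by
    intro G H hG
    rw [← lintegral_add_left (hmeas1 G hG)]
    refine lintegral_congr fun s => ?_
    rw [← lintegral_add_left (hmeas2 G hG s)]
    refine lintegral_congr fun t => ?_
    rw [← lintegral_add_left (by fun_prop)]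
  calc _ = ∫⁻ s, ∫⁻ t, ∫⁻ w, F (r + a * s + b * t + c * w) * (pW s ^ 2 * (pW t ^ 2 * pW w ^ 2)) := by
        refine lintegral_congr fun s => ?_
        rw [← lintegral_mul_const]
        · refine lintegral_congr fun t => ?_
          rw [← lintegral_mul_const _ (by fun_prop), ← lintegral_mul_const _ (by fun_prop)]
          refine lintegral_congr fun w => ?_
          ring
        · refine Measurable.mul ?_ (by fun_prop)
          exact hmeas2 (fun z => F (r + a * z.1.1 + b * z.1.2 + c * z.2) * pW z.2 ^ 2) (by fun_prop) s
    _ ≤ ∫⁻ s, ∫⁻ t, ∫⁻ w, ((F (r + a * s + b * t + c * w) * (pW s ^ 3 * pW t ^ 3)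
          + F (r + a * s + b * t + c * w) * (pW s ^ 3 * pW w ^ 3))
          + F (r + a * s + b * t + c * w) * (pW t ^ 3 * pW w ^ 3)) := by
        refine lintegral_mono fun s => lintegral_mono fun t => lintegral_mono fun w => ?_
        dsimp only
        rw [← mul_add, ← mul_add]
        gcongr
        exact amgm _ _ _
    _ ≤ _ := by
        refine (le_of_eq (hadd (fun z => F (r + a * z.1.1 + b * z.1.2 + c * z.2) * (pW z.1.1 ^ 3 * pW z.1.2 ^ 3)
          + F (r + a * z.1.1 + b * z.1.2 + c * z.2) * (pW z.1.1 ^ 3 * pW z.2 ^ 3))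
          (fun z => F (r + a * z.1.1 + b * z.1.2 + c * z.2) * (pW z.1.2 ^ 3 * pW z.2 ^ 3))
          (by fun_prop))).trans ?_
        have h12 := (le_of_eq (hadd (fun z => F (r + a * z.1.1 + b * z.1.2 + c * z.2)
          * (pW z.1.1 ^ 3 * pW z.1.2 ^ 3))
          (fun z => F (r + a * z.1.1 + b * z.1.2 + c * z.2) * (pW z.1.1 ^ 3 * pW z.2 ^ 3))
          (by fun_prop))).trans (add_le_add hT1 hT2)
        refine (add_le_add h12 hT3).trans (le_of_eq ?_)
        ring

lemma three_var (F : ℝ → ENNReal) (hF : Measurable F) (r a b c ca cb cc δ : ℝ) (hδ : 0 < δ)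
    (ha : δ ≤ |a|) (hb : δ ≤ |b|) (hc : δ ≤ |c|) :
    ∫⁻ s in Set.Icc (0 : ℝ) 1, ∫⁻ t in Set.Icc (0 : ℝ) 1, ∫⁻ w in Set.Icc (0 : ℝ) 1,
      F (r + a * Real.cos (2 * Real.pi * (ca + s)) + b * Real.cos (2 * Real.pi * (cb + t))
        + c * Real.cos (2 * Real.pi * (cc + w)))
      ≤ 81 * (∫⁻ s, pW s ^ 3) ^ 2 * (ENNReal.ofReal δ⁻¹ * ∫⁻ s, F s) := by
  calc _ ≤ ∫⁻ s in Set.Icc (0 : ℝ) 1, ∫⁻ t in Set.Icc (0 : ℝ) 1, 3 * ∫⁻ w,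
      F (r + a * Real.cos (2 * Real.pi * (ca + s)) + b * Real.cos (2 * Real.pi * (cb + t))
        + c * w) * pW w ^ 2 := by
        refine lintegral_mono fun s => lintegral_mono fun t => ?_
        exact one_var cc (fun z => F (r + a * Real.cos (2 * Real.pi * (ca + s))
          + b * Real.cos (2 * Real.pi * (cb + t)) + c * z))
    _ ≤ ∫⁻ s in Set.Icc (0 : ℝ) 1, 3 * ∫⁻ t, (3 * ∫⁻ w,
      F (r + a * Real.cos (2 * Real.pi * (ca + s)) + b * t + c * w) * pW w ^ 2) * pW t ^ 2 := by
        refine lintegral_mono fun s => ?_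
        exact one_var cb (fun z => 3 * ∫⁻ w, F (r + a * Real.cos (2 * Real.pi * (ca + s))
          + b * z + c * w) * pW w ^ 2)
    _ ≤ 3 * ∫⁻ s, (3 * ∫⁻ t, (3 * ∫⁻ w,
      F (r + a * s + b * t + c * w) * pW w ^ 2) * pW t ^ 2) * pW s ^ 2 :=
        one_var ca (fun y => 3 * ∫⁻ t, (3 * ∫⁻ w, F (r + a * y
          + b * t + c * w) * pW w ^ 2) * pW t ^ 2)
    _ = 27 * ∫⁻ s, (∫⁻ t, (∫⁻ w,
      F (r + a * s + b * t + c * w) * pW w ^ 2) * pW t ^ 2) * pW s ^ 2 := by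
        simp_rw [mul_assoc]
        simp_rw [lintegral_const_mul' (3 : ENNReal) _ (by norm_num)]
        simp_rw [mul_assoc]
        simp_rw [lintegral_const_mul' (3 : ENNReal) _ (by norm_num)]
        rw [← mul_assoc, ← mul_assoc]
        norm_num
    _ ≤ 27 * (3 * (∫⁻ s, pW s ^ 3) ^ 2 * (ENNReal.ofReal δ⁻¹ * ∫⁻ s, F s)) := by
        gcongr
        exact three_dens F hF r a b c δ hδ ha hb hc
    _ = _ := by ring_nf

lemma polar_bound (F : ℝ → ENNReal) (hF : Measurable F) :
    ∫⁻ x, ∫⁻ y, F (x ^ 2 + y ^ 2) ≤ ENNReal.ofReal (2 * Real.pi) * ∫⁻ t, F t := by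
  have h0 : ∫⁻ x, ∫⁻ y, F (x ^ 2 + y ^ 2) = ∫⁻ p : ℝ × ℝ, F (p.1 ^ 2 + p.2 ^ 2) := by
    rw [Measure.volume_eq_prod, lintegral_prod _ (by fun_prop)]
  rw [h0, ← lintegral_comp_polarCoord_symm]
  have h1 : ∀ p : ℝ × ℝ, ENNReal.ofReal p.1 • F ((polarCoord.symm p).1 ^ 2 + (polarCoord.symm p).2 ^ 2)
      = ENNReal.ofReal p.1 * F (p.1 ^ 2) := by
    intro p
    simp only [polarCoord_symm_apply, smul_eq_mul]
    congr 2
    nlinarith [Real.sin_sq_add_cos_sq p.2]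
  simp_rw [h1]
  rw [polarCoord_target, Measure.volume_eq_prod, ← Measure.prod_restrict, lintegral_prod _ (by fun_prop)]
  simp only [lintegral_const, Measure.restrict_apply MeasurableSet.univ, Set.univ_inter, Real.volume_Ioo]
  rw [lintegral_mul_const _ (by fun_prop), mul_comm]
  have e : Real.pi - -Real.pi = 2 * Real.pi := by ring
  rw [e]
  refine mul_le_mul_right ?_ _
  have key := lintegral_image_eq_lintegral_abs_deriv_mul (s := Set.Ioi (0 : ℝ)) (f := fun r => r ^ 2)
    (f' := fun r => 2 * r) measurableSet_Ioi
    (fun x _ => by simpa using (hasDerivAt_pow 2 x).hasDerivWithinAt)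
    (by
      intro x hx y hy hxy
      simp only [Set.mem_Ioi] at hx hy
      exact (pow_left_inj₀ hx.le hy.le (by norm_num)).1 hxy) F
  refine LE.le.trans ?_ (setLIntegral_le_lintegral (μ := volume) ((fun r : ℝ => r ^ 2) '' Set.Ioi 0) F)
  rw [key]
  refine setLIntegral_mono' measurableSet_Ioi fun x hx => ?_
  simp only [Set.mem_Ioi] at hx
  gcongr
  rw [abs_of_pos (by positivity)]
  linarith

lemma uniform_eq (μ : Measure (ℕ → ℝ)) (hμ : IsUniformProductMeasure μ) :
    haveI : IsProbabilityMeasure (volume.restrict (Set.Icc (0 : ℝ) 1)) := ⟨by simp⟩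
    μ = Measure.infinitePi (fun _ : ℕ => volume.restrict (Set.Icc (0 : ℝ) 1)) := by
  have : IsProbabilityMeasure (volume.restrict (Set.Icc (0 : ℝ) 1)) := ⟨by simp⟩
  refine Measure.eq_infinitePi _ fun s t ht => ?_
  rw [← hμ s t ht]
  rfl

lemma uniform_prob (μ : Measure (ℕ → ℝ)) (hμ : IsUniformProductMeasure μ) :
    IsProbabilityMeasure μ := ⟨by simpa using hμ ∅ (fun _ => Set.univ) (fun _ => MeasurableSet.univ)⟩

lemma meas_update (i : ℕ) :
    Measurable (fun p : (ℕ → ℝ) × ℝ => Function.update p.1 i p.2) := by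
  refine measurable_pi_iff.2 fun j => ?_
  by_cases h : j = i
  · subst h; simpa using measurable_snd
  · simp only [Function.update_of_ne h]; fun_prop

lemma update_lint (μ : Measure (ℕ → ℝ)) (hμ : IsUniformProductMeasure μ) (i : ℕ)
    (G : (ℕ → ℝ) → ENNReal) (hG : Measurable G) :
    ∫⁻ θ, G θ ∂μ = ∫⁻ θ, (∫⁻ u in Set.Icc (0 : ℝ) 1, G (Function.update θ i u)) ∂μ := by
  have := uniform_prob μ hμ
  have : IsProbabilityMeasure (volume.restrict (Set.Icc (0 : ℝ) 1)) := ⟨by simp⟩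
  have hmap : Measure.map (fun p : (ℕ → ℝ) × ℝ => Function.update p.1 i p.2)
      (μ.prod (volume.restrict (Set.Icc (0 : ℝ) 1))) = μ := by
    rw [uniform_eq μ hμ]
    refine Measure.eq_infinitePi _ fun s t ht => ?_
    rw [Measure.map_apply (meas_update i) (MeasurableSet.pi s.countable_toSet fun j _ => ht j)]
    rw [← uniform_eq μ hμ]
    have hpre : (fun p : (ℕ → ℝ) × ℝ => Function.update p.1 i p.2) ⁻¹' (Set.pi s t)
        = {f : ℕ → ℝ | ∀ j ∈ s.erase i, f j ∈ t j} ×ˢ (if i ∈ s then t i else Set.univ) := by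
      ext ⟨f, u⟩
      simp only [Set.mem_preimage, Set.mem_pi, Set.mem_prod, Set.mem_ofPred_eq, Finset.mem_erase,
        Finset.mem_coe]
      constructor
      · intro h
        refine ⟨fun j hj => by simpa [Function.update_of_ne hj.1] using h j hj.2, ?_⟩
        split_ifs with hi
        · simpa using h i hi
        · trivial
      · rintro ⟨h1, h2⟩ j hj
        by_cases hji : j = i
        · subst hji; simpa [hj] using h2
        · simpa [Function.update_of_ne hji] using h1 j ⟨hji, hj⟩
    rw [hpre, Measure.prod_prod, hμ _ _ ht]
    split_ifs with hi
    · exact Finset.prod_erase_mul s _ hi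
    · simp [Finset.erase_eq_of_notMem hi]
  conv_lhs => rw [← hmap]
  rw [lintegral_map hG (meas_update i), lintegral_prod]
  exact (hG.comp (meas_update i)).aemeasurable

noncomputable def serW (a c θ : ℕ → ℝ) : ℝ := ∑' n, a n * Real.cos (2 * Real.pi * (c n + θ n))

lemma serW_summable (a c θ : ℕ → ℝ) (ha : Summable fun n => |a n|) :
    Summable fun n => a n * Real.cos (2 * Real.pi * (c n + θ n)) := by
  refine Summable.of_norm_bounded ha fun n => ?_
  rw [Real.norm_eq_abs, abs_mul]
  exact mul_le_of_le_one_right (abs_nonneg _) (Real.abs_cos_le_one _)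

lemma serW_meas (a c : ℕ → ℝ) (ha : Summable fun n => |a n|) : Measurable (serW a c) := by
  refine measurable_of_tendsto_metrizable (f := fun N θ => ∑ n ∈ Finset.range N,
    a n * Real.cos (2 * Real.pi * (c n + θ n))) (fun N => by fun_prop) ?_
  rw [tendsto_pi_nhds]
  intro θ
  exact (serW_summable a c θ ha).hasSum.tendsto_sum_nat

lemma serW_update (a c θ : ℕ → ℝ) (ha : Summable fun n => |a n|) (i : ℕ) (u : ℝ) :
    serW a c (Function.update θ i u) = serW a c θ
      - a i * Real.cos (2 * Real.pi * (c i + θ i)) + a i * Real.cos (2 * Real.pi * (c i + u)) := by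
  have h := (serW_summable a c θ ha).hasSum.update i (a i * Real.cos (2 * Real.pi * (c i + u)))
  have e : Function.update (fun n => a n * Real.cos (2 * Real.pi * (c n + θ n))) i
      (a i * Real.cos (2 * Real.pi * (c i + u)))
      = fun n => a n * Real.cos (2 * Real.pi * (c n + Function.update θ i u n)) := by
    ext n
    by_cases hn : n = i
    · subst hn; simp
    · simp [Function.update_of_ne hn]
  rw [e] at h
  unfold serW
  rw [h.tsum_eq]
  ring

lemma serW_law (μ : Measure (ℕ → ℝ)) (hμ : IsUniformProductMeasure μ) (a c : ℕ → ℝ)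
    (ha : Summable fun n => |a n|) (i j k : ℕ) (hij : i ≠ j) (hik : i ≠ k) (hjk : j ≠ k)
    (δ : ℝ) (hδ : 0 < δ) (hi : δ ≤ |a i|) (hj : δ ≤ |a j|) (hk : δ ≤ |a k|)
    (F : ℝ → ENNReal) (hF : Measurable F) :
    ∫⁻ θ, F (serW a c θ) ∂μ
      ≤ 81 * (∫⁻ s, pW s ^ 3) ^ 2 * (ENNReal.ofReal δ⁻¹ * ∫⁻ s, F s) := by
  have := uniform_prob μ hμ
  have : IsProbabilityMeasure (volume.restrict (Set.Icc (0 : ℝ) 1)) := ⟨by simp⟩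
  have hm := serW_meas a c ha
  have m0 : Measurable fun θ => F (serW a c θ) := hF.comp hm
  have m1 : Measurable fun θ => ∫⁻ u in Set.Icc (0 : ℝ) 1, F (serW a c (Function.update θ k u)) :=
    Measurable.lintegral_prod_right' (f := fun z : (ℕ → ℝ) × ℝ =>
      F (serW a c (Function.update z.1 k z.2))) (m0.comp (meas_update k))
  have m2 : Measurable fun θ => ∫⁻ v in Set.Icc (0 : ℝ) 1, ∫⁻ u in Set.Icc (0 : ℝ) 1,
      F (serW a c (Function.update (Function.update θ j v) k u)) :=
    Measurable.lintegral_prod_right' (f := fun z : (ℕ → ℝ) × ℝ =>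
      ∫⁻ u in Set.Icc (0 : ℝ) 1, F (serW a c (Function.update (Function.update z.1 j z.2) k u)))
      (m1.comp (meas_update j))
  rw [update_lint μ hμ k _ m0, update_lint μ hμ j _ m1, update_lint μ hμ i _ m2]
  refine le_trans (lintegral_mono (g := fun _ =>
    81 * (∫⁻ s, pW s ^ 3) ^ 2 * (ENNReal.ofReal δ⁻¹ * ∫⁻ s, F s)) fun θ => ?_) (by simp)
  refine le_trans (le_of_eq ?_) (three_var F hF (serW a c θ
      - a i * Real.cos (2 * Real.pi * (c i + θ i)) - a j * Real.cos (2 * Real.pi * (c j + θ j))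
      - a k * Real.cos (2 * Real.pi * (c k + θ k))) (a i) (a j) (a k) (c i) (c j) (c k) δ hδ hi hj hk)
  refine lintegral_congr fun s => lintegral_congr fun t => lintegral_congr fun w => ?_
  congr 1
  rw [serW_update _ _ _ ha, serW_update _ _ _ ha, serW_update _ _ _ ha]
  rw [Function.update_of_ne hjk.symm, Function.update_of_ne hik.symm, Function.update_of_ne hij.symm]
  ring

lemma density_of_le (ν : Measure ℝ) [IsProbabilityMeasure ν] (C : ℝ) (hC : 0 ≤ C)
    (h : ∀ s, MeasurableSet s → ν s ≤ ENNReal.ofReal C * volume s) :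
    ∃ h : ℝ → ℝ, (∀ t, 0 ≤ h t) ∧ ν = volume.withDensity (fun t => ENNReal.ofReal (h t)) ∧
      ∀ t, h t ≤ C := by
  have hac : ν ≪ volume := by
    refine Measure.AbsolutelyContinuous.mk fun s hs h0 => ?_
    have := h s hs
    rw [h0, mul_zero] at this
    exact le_antisymm this zero_le
  have hle : ν.rnDeriv volume ≤ᵐ[volume] fun _ => ENNReal.ofReal C := by
    refine ae_le_of_forall_setLIntegral_le_of_sigmaFinite (ν.measurable_rnDeriv volume) fun s hs _ => ?_
    rw [setLIntegral_const]
    exact (Measure.setLIntegral_rnDeriv_le s).trans (h s hs)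
  refine ⟨fun t => (min (ν.rnDeriv volume t) (ENNReal.ofReal C)).toReal,
    fun t => ENNReal.toReal_nonneg, ?_, fun t => ?_⟩
  · conv_lhs => rw [← Measure.withDensity_rnDeriv_eq ν volume hac]
    refine withDensity_congr_ae ?_
    filter_upwards [hle] with t ht
    rw [ENNReal.ofReal_toReal, min_eq_left ht]
    exact ne_top_of_le_ne_top ENNReal.ofReal_ne_top (min_le_right _ _)
  · exact ENNReal.toReal_le_of_le_ofReal hC (min_le_right _ _)

lemma joint_law (μ : Measure (ℕ → ℝ)) (hμ : IsUniformProductMeasure μ) (a c c' : ℕ → ℝ)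
    (ha : Summable fun n => |a n|) (i j k : ℕ) (hij : i ≠ j) (hik : i ≠ k) (hjk : j ≠ k)
    (δ : ℝ) (hδ : 0 < δ) (hi : δ ≤ |a i|) (hj : δ ≤ |a j|) (hk : δ ≤ |a k|)
    (F : ℝ → ENNReal) (hF : Measurable F) :
    ∫⁻ p, F ((serW a c p.1) ^ 2 + (serW a c' p.2) ^ 2) ∂(μ.prod μ)
      ≤ (81 * (∫⁻ s, pW s ^ 3) ^ 2 * ENNReal.ofReal δ⁻¹) ^ 2
        * (ENNReal.ofReal (2 * Real.pi) * ∫⁻ s, F s) := by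
  have := uniform_prob μ hμ
  have hm := serW_meas a c ha
  have hm' := serW_meas a c' ha
  set K := 81 * (∫⁻ s, pW s ^ 3) ^ 2 * ENNReal.ofReal δ⁻¹ with hK
  have mG : Measurable fun x : ℝ => ∫⁻ y, F (x ^ 2 + y ^ 2) :=
    Measurable.lintegral_prod_right' (f := fun z : ℝ × ℝ => F (z.1 ^ 2 + z.2 ^ 2)) (by fun_prop)
  rw [lintegral_prod _ (by fun_prop)]
  calc _ ≤ ∫⁻ θ, (K * ∫⁻ y, F ((serW a c θ) ^ 2 + y ^ 2)) ∂μ := by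
        refine lintegral_mono fun θ => ?_
        rw [hK, mul_assoc]
        exact serW_law μ hμ a c' ha i j k hij hik hjk δ hδ hi hj hk
          (fun y => F ((serW a c θ) ^ 2 + y ^ 2)) (by fun_prop)
    _ = K * ∫⁻ θ, (∫⁻ y, F ((serW a c θ) ^ 2 + y ^ 2)) ∂μ :=
        lintegral_const_mul _ (mG.comp hm)
    _ ≤ K * (K * ∫⁻ x, ∫⁻ y, F (x ^ 2 + y ^ 2)) := by
        gcongr
        have := serW_law μ hμ a c ha i j k hij hik hjk δ hδ hi hj hk
          (fun x => ∫⁻ y, F (x ^ 2 + y ^ 2)) mG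
        rw [← mul_assoc, ← hK] at this
        exact this
    _ ≤ K * (K * (ENNReal.ofReal (2 * Real.pi) * ∫⁻ s, F s)) := by
        gcongr
        exact polar_bound F hF
    _ = _ := by ring

lemma geo_summable (b β : ℝ) (hb : 1 < b) (hβ : 0 < β) :
    Summable fun n : ℕ => b ^ (-β * (n : ℝ)) := by
  have hb0 : 0 < b := by linarith
  have : (fun n : ℕ => b ^ (-β * (n : ℝ))) = fun n : ℕ => (b ^ (-β)) ^ n := by
    ext n
    rw [Real.rpow_mul hb0.le, Real.rpow_natCast]
  rw [this]
  exact summable_geometric_of_lt_one (by positivity) (Real.rpow_lt_one_of_one_lt_of_neg hb (by linarith))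

noncomputable def ampW (b β x y : ℝ) (n : ℕ) : ℝ :=
  2 * b ^ (-β * (n : ℝ)) * Real.sin (Real.pi * (b ^ n * (x - y)))

lemma ampW_summable (b β x y : ℝ) (hb : 1 < b) (hβ : 0 < β) :
    Summable fun n => |ampW b β x y n| := by
  have hb0 : 0 < b := by linarith
  refine Summable.of_nonneg_of_le (fun n => abs_nonneg _) (fun n => ?_)
    ((geo_summable b β hb hβ).mul_left 2)
  unfold ampW
  rw [abs_mul, abs_of_pos (by positivity : 0 < 2 * b ^ (-β * (n : ℝ)))]
  exact mul_le_of_le_one_right (by positivity) (Real.abs_sin_le_one _)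

lemma W1_sub (b β x y : ℝ) (θ : ℕ → ℝ) (hb : 1 < b) (hβ : 0 < β) :
    W1 b β θ x - W1 b β θ y = serW (ampW b β x y) (fun n => b ^ n * (x + y) / 2 + 1 / 4) θ := by
  have hb0 : 0 < b := by linarith
  have hs : ∀ t, Summable fun n : ℕ =>
      b ^ (-β * (n : ℝ)) * Real.cos (2 * Real.pi * (b ^ n * t + θ n)) := by
    intro t
    refine Summable.of_norm_bounded (geo_summable b β hb hβ) fun n => ?_
    rw [Real.norm_eq_abs, abs_mul, abs_of_pos (by positivity : 0 < b ^ (-β * (n : ℝ)))]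
    exact mul_le_of_le_one_right (by positivity) (Real.abs_cos_le_one _)
  unfold W1 serW
  rw [← (hs x).tsum_sub (hs y)]
  refine tsum_congr fun n => ?_
  rw [← mul_sub, Real.cos_sub_cos]
  have e1 : 2 * Real.pi * (b ^ n * (x + y) / 2 + 1 / 4 + θ n)
      = (2 * Real.pi * (b ^ n * x + θ n) + 2 * Real.pi * (b ^ n * y + θ n)) / 2 + Real.pi / 2 := by
    ring
  have e2 : (2 * Real.pi * (b ^ n * x + θ n) - 2 * Real.pi * (b ^ n * y + θ n)) / 2
      = Real.pi * (b ^ n * (x - y)) := by ring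
  rw [e1, e2, Real.cos_add_pi_div_two]
  unfold ampW
  ring

lemma W2_sub (b β x y : ℝ) (θ : ℕ → ℝ) (hb : 1 < b) (hβ : 0 < β) :
    W2 b β θ x - W2 b β θ y = serW (ampW b β x y) (fun n => b ^ n * (x + y) / 2) θ := by
  have hb0 : 0 < b := by linarith
  have hs : ∀ t, Summable fun n : ℕ =>
      b ^ (-β * (n : ℝ)) * Real.sin (2 * Real.pi * (b ^ n * t + θ n)) := by
    intro t
    refine Summable.of_norm_bounded (geo_summable b β hb hβ) fun n => ?_
    rw [Real.norm_eq_abs, abs_mul, abs_of_pos (by positivity : 0 < b ^ (-β * (n : ℝ)))]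
    exact mul_le_of_le_one_right (by positivity) (Real.abs_sin_le_one _)
  unfold W2 serW
  rw [← (hs x).tsum_sub (hs y)]
  refine tsum_congr fun n => ?_
  rw [← mul_sub, Real.sin_sub_sin]
  have e1 : 2 * Real.pi * (b ^ n * (x + y) / 2 + θ n)
      = (2 * Real.pi * (b ^ n * x + θ n) + 2 * Real.pi * (b ^ n * y + θ n)) / 2 := by
    ring
  have e2 : (2 * Real.pi * (b ^ n * x + θ n) - 2 * Real.pi * (b ^ n * y + θ n)) / 2
      = Real.pi * (b ^ n * (x - y)) := by ring
  rw [e1, e2]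
  unfold ampW
  ring

lemma ampW_lower (b β x y : ℝ) (hb : 1 < b) (hβ : 0 < β) (hd : 0 < |x - y|) (m : ℕ)
    (h1 : b ^ m * |x - y| ≤ 1 / 2) (h2 : 1 / 2 ≤ b ^ 3 * (b ^ m * |x - y|)) :
    2 / b ^ 3 * |x - y| ^ β ≤ |ampW b β x y m| := by
  have hb0 : 0 < b := by linarith
  have hpi := Real.pi_pos
  set d := |x - y| with hdd
  unfold ampW
  have hsin : |Real.sin (Real.pi * (b ^ m * (x - y)))| = |Real.sin (Real.pi * (b ^ m * d))| := by
    rcases abs_choice (x - y) with h | h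
    · rw [hdd, h]
    · rw [hdd, h, mul_neg, mul_neg, Real.sin_neg, abs_neg]
  have hs : 1 / b ^ 3 ≤ |Real.sin (Real.pi * (b ^ m * d))| := by
    refine le_trans ?_ (le_abs_self _)
    refine le_trans ?_ (Real.mul_le_sin (by positivity) (by nlinarith))
    have : 2 / Real.pi * (Real.pi * (b ^ m * d)) = 2 * (b ^ m * d) := by field_simp
    rw [this, div_le_iff₀ (by positivity)]
    linarith
  have hp : d ^ β ≤ b ^ (-β * (m : ℝ)) := by
    have e : b ^ (-β * (m : ℝ)) = (b ^ m) ^ (-β) := by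
      rw [mul_comm, Real.rpow_mul hb0.le, Real.rpow_natCast]
    rw [e, Real.rpow_neg (by positivity), ← Real.inv_rpow (by positivity)]
    refine Real.rpow_le_rpow hd.le ?_ hβ.le
    rw [le_inv_comm₀ hd (by positivity), le_inv_comm₀ (by positivity) hd]
    rw [← one_div, le_div_iff₀ (by positivity)]
    linarith
  rw [abs_mul, hsin, abs_of_pos (by positivity : 0 < 2 * b ^ (-β * (m : ℝ)))]
  calc 2 / b ^ 3 * d ^ β = 2 * d ^ β * (1 / b ^ 3) := by ring
    _ ≤ 2 * b ^ (-β * (m : ℝ)) * |Real.sin (Real.pi * (b ^ m * d))| := by gcongr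

/-- there is `C₁ > 0` (depending only on `b`, `β`) such that for all
`x, y ∈ [0,1]` with `0 < |x-y| ≤ 1/(2b²)`, the random variable
`X(Θ,Λ) = |f_{Θ,Λ}(x) - f_{Θ,Λ}(y)|²` has a probability density function `h`
with respect to Lebesgue measure, and `h(t) ≤ C₁ |x-y|^{-2β}` for all `t`. -/
theorem stmt_10 (b β : ℝ) (hb : 1 < b) (hβ : β ∈ Set.Ioo (0 : ℝ) (1 / 2))
    (μ : Measure (ℕ → ℝ)) (hμ : IsUniformProductMeasure μ) :
    ∃ C₁ > (0 : ℝ), ∀ x ∈ Set.Icc (0 : ℝ) 1, ∀ y ∈ Set.Icc (0 : ℝ) 1,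
      0 < |x - y| → |x - y| ≤ 1 / (2 * b ^ 2) →
      ∃ h : ℝ → ℝ, (∀ t, 0 ≤ h t) ∧
        Measure.map (fun p : (ℕ → ℝ) × (ℕ → ℝ) => (Wdist b β p.1 p.2 x y) ^ 2)
            (μ.prod μ) =
          volume.withDensity (fun t => ENNReal.ofReal (h t)) ∧
        ∀ t, h t ≤ C₁ * |x - y| ^ (-(2 * β)) := by
  obtain ⟨hβ0, hβ1⟩ := hβ
  have hb0 : 0 < b := by linarith
  have hpi := Real.pi_pos
  have := uniform_prob μ hμ
  set KE : ENNReal := 81 * (∫⁻ s, pW s ^ 3) ^ 2 with hKE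
  have hKEfin : KE ≠ ⊤ :=
    ENNReal.mul_ne_top (by norm_num) (ENNReal.pow_ne_top pW_cube_fin.ne)
  set K := KE.toReal with hK
  have hK0 : 0 ≤ K := ENNReal.toReal_nonneg
  refine ⟨(K * (b ^ 3 / 2)) ^ 2 * (2 * Real.pi) + 1, by positivity, ?_⟩
  intro x hx y hy hd hdle
  set d := |x - y| with hdd
  set δ := 2 / b ^ 3 * d ^ β with hδ
  have hδ0 : 0 < δ := by positivity
  obtain ⟨n, hn1, hn2⟩ : ∃ n : ℕ, b ^ n ≤ 1 / (2 * d) ∧ 1 / (2 * d) < b ^ (n + 1) := by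
    refine exists_nat_pow_near ?_ hb
    rw [le_div_iff₀ (by positivity)]
    rw [le_div_iff₀ (by positivity)] at hdle
    nlinarith
  have hb2 : b ^ 2 ≤ 1 / (2 * d) := by
    rw [le_div_iff₀ (by positivity)]
    rw [le_div_iff₀ (by positivity)] at hdle
    linarith
  have hn : 2 ≤ n := by
    have := (pow_lt_pow_iff_right₀ hb).1 (lt_of_le_of_lt hb2 hn2)
    omega
  obtain ⟨m, rfl⟩ : ∃ m, n = m + 2 := ⟨n - 2, by omega⟩
  rw [le_div_iff₀ (by positivity)] at hn1
  rw [div_lt_iff₀ (by positivity)] at hn2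
  have hlow : ∀ i ≤ 2, δ ≤ |ampW b β x y (m + i)| := by
    intro i hi
    refine ampW_lower b β x y hb hβ0 hd (m + i) ?_ ?_
    · have : b ^ (m + i) ≤ b ^ (m + 2) := pow_le_pow_right₀ hb.le (by omega)
      nlinarith
    · have h3 : b ^ (m + 2 + 1) ≤ b ^ 3 * b ^ (m + i) := by
        rw [← pow_add]; exact pow_le_pow_right₀ hb.le (by omega)
      have : b ^ (m + 2 + 1) * d ≤ b ^ 3 * b ^ (m + i) * d := by gcongr
      nlinarith
  set c : ℕ → ℝ := fun n => b ^ n * (x + y) / 2 + 1 / 4 with hc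
  set c' : ℕ → ℝ := fun n => b ^ n * (x + y) / 2 with hc'
  have hsum := ampW_summable b β x y hb hβ0
  have hX : (fun p : (ℕ → ℝ) × (ℕ → ℝ) => (Wdist b β p.1 p.2 x y) ^ 2)
      = fun p => (serW (ampW b β x y) c p.1) ^ 2 + (serW (ampW b β x y) c' p.2) ^ 2 := by
    ext p
    unfold Wdist
    rw [Real.sq_sqrt (by positivity), W1_sub b β x y _ hb hβ0, W2_sub b β x y _ hb hβ0]
  have m1 := serW_meas (ampW b β x y) c hsum
  have m2 := serW_meas (ampW b β x y) c' hsum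
  have hXm : Measurable (fun p : (ℕ → ℝ) × (ℕ → ℝ) =>
      (serW (ampW b β x y) c p.1) ^ 2 + (serW (ampW b β x y) c' p.2) ^ 2) := by fun_prop
  rw [hX]
  have hprob : IsProbabilityMeasure (Measure.map (fun p : (ℕ → ℝ) × (ℕ → ℝ) =>
      (serW (ampW b β x y) c p.1) ^ 2 + (serW (ampW b β x y) c' p.2) ^ 2) (μ.prod μ)) :=
    Measure.isProbabilityMeasure_map hXm.aemeasurable
  obtain ⟨h, h1, h2, h3⟩ := density_of_le _ ((K * δ⁻¹) ^ 2 * (2 * Real.pi)) (by positivity)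
    (fun s hs => by
      have key := joint_law μ hμ (ampW b β x y) c c' hsum (m + 0) (m + 1) (m + 2) (by omega)
        (by omega) (by omega) δ hδ0 (hlow 0 (by omega)) (hlow 1 (by omega)) (hlow 2 (by omega))
        (s.indicator 1) (measurable_one.indicator hs)
      rw [lintegral_indicator_one hs] at key
      rw [Measure.map_apply hXm hs, ← lintegral_indicator_one (hXm hs)]
      refine le_trans (le_of_eq ?_) (key.trans (le_of_eq ?_))
      · rfl
      · rw [← hKE, ← ENNReal.ofReal_toReal hKEfin, ← hK, ← ENNReal.ofReal_mul hK0,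
          ← ENNReal.ofReal_pow (by positivity), ← mul_assoc, ← ENNReal.ofReal_mul (by positivity)])
  refine ⟨h, h1, h2, fun t => (h3 t).trans ?_⟩
  have e : d ^ (-(2 * β)) = ((d ^ β)⁻¹) ^ 2 := by
    rw [Real.rpow_neg hd.le, mul_comm, Real.rpow_mul hd.le, inv_pow]
    norm_num
  have e2 : (K * δ⁻¹) ^ 2 * (2 * Real.pi) = (K * (b ^ 3 / 2)) ^ 2 * (2 * Real.pi) * d ^ (-(2 * β)) := by
    rw [e, hδ]
    field_simp
  rw [e2]
  have : 0 < d ^ (-(2 * β)) := by positivity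
  gcongr
  linarith
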